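/- Let S be a profinite space (compact, Hausdorff, totally disconnected topological space) and let C(S, F₂) be the ring of continuous functions from S to the discrete field F₂. Then the evaluation map from S to the set of ring homomorphisms C(S, F₂) → F₂, sending s ∈ S to the homomorphism f ↦ f(s), is a bijection. -/

import Mathlib

/-- The field `F₂` with the discrete topology. -/
instance : TopologicalSpace (ZMod 2) := ⊥

instance : DiscreteTopology (ZMod 2) := ⟨rfl⟩

/-- Evaluation at a point `s : S`, as a ring homomorphism from the ring `C(S, F₂)` of
continuous `F₂`-valued functions, sending `f` to `f s`. -/
def evalAtRingHom (S : Type*) [TopologicalSpace S] (s : S) :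
    C(S, ZMod 2) →+* ZMod 2 :=
  (Pi.evalRingHom (fun _ : S => ZMod 2) s).comp (ContinuousMap.coeFnRingHom)

/-!
Over a discrete field, with `0⁻¹ = 0`, the function `1 - f f⁻¹` is the continuous indicator of the
zero set of `f`, and it is congruent to `1` modulo any ideal containing `f`. If finitely many
elements of a proper ideal had no common zero, the product of these indicators would vanish while
being congruent to `1`; compactness then gives the whole ideal a common zero. Applied to the kernel
of a character `φ`, which contains every `f - φ f`, this shows that `φ` is evaluation at a point.
Clopen sets separate the points, and over `F₂` every ring homomorphism is an algebra homomorphism.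
-/

theorem algHom_toRingHom_bijective {R A B : Type*} [CommSemiring R] [Semiring A] [Semiring B]
    [Algebra R A] [Algebra R B] [Subsingleton (R →+* B)] :
    Function.Bijective (fun φ : A →ₐ[R] B => (φ : A →+* B)) := by
  refine ⟨AlgHom.coe_ringHom_injective, fun φ => ⟨{ φ with commutes' := fun r => ?_ }, rfl⟩⟩
  exact DFunLike.congr_fun (Subsingleton.elim (φ.comp (algebraMap R A)) (algebraMap R B)) r

theorem evalAlgHom_injective (R X : Type*) [CommSemiring R] [Nontrivial R] [TopologicalSpace R]
    [IsTopologicalSemiring R] [TopologicalSpace X] [TotallySeparatedSpace X] :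
    Function.Injective (ContinuousMap.evalAlgHom R R : X → C(X, R) →ₐ[R] R) := by
  intro x y hxy
  by_contra hne
  obtain ⟨_, ⟨f, -, rfl⟩, hf⟩ :=
    LocallyConstant.separatesPoints_range_toContinuousMapAlgHom (Y := R) R hne
  exact hf (DFunLike.congr_fun hxy f)

section DiscreteField

variable {k X : Type*} [Field k] [TopologicalSpace k] [DiscreteTopology k] [TopologicalSpace X]

theorem exists_dvd_one_sub_and_eq_zero_of_ne_zero (f : C(X, k)) :
    ∃ e : C(X, k), f ∣ 1 - e ∧ ∀ x, f x ≠ 0 → e x = 0 := by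
  let g : C(X, k) := ⟨fun x => (f x)⁻¹, continuous_of_discreteTopology.comp f.continuous⟩
  refine ⟨1 - f * g, ⟨g, sub_sub_cancel 1 (f * g)⟩, fun x hx => ?_⟩
  exact sub_eq_zero.2 (mul_inv_cancel₀ hx).symm

theorem exists_forall_mem_finset_apply_eq_zero {I : Ideal C(X, k)} (hI : I ≠ ⊤) (u : Finset I) :
    ∃ x, ∀ f ∈ u, f.1 x = 0 := by
  by_contra! hu
  choose e he_dvd he_zero using exists_dvd_one_sub_and_eq_zero_of_ne_zero (k := k) (X := X)
  have prod_eq_zero : ∏ f ∈ u, e f = 0 := by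
    ext x
    obtain ⟨f, hf, hfx⟩ := hu x
    rw [ContinuousMap.prod_apply]
    exact Finset.prod_eq_zero hf (he_zero f x hfx)
  have mk_eq_one (f : I) : Ideal.Quotient.mk I (e f) = 1 :=
    (Ideal.Quotient.eq.2 (I.mem_of_dvd (he_dvd f) f.2)).symm
  have mk_prod_eq_one : Ideal.Quotient.mk I (∏ f ∈ u, e f) = 1 := by
    rw [map_prod, Finset.prod_eq_one fun f _ => mk_eq_one f]
  rw [prod_eq_zero, map_zero] at mk_prod_eq_one
  have := Ideal.Quotient.nontrivial_iff.2 hI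
  exact zero_ne_one mk_prod_eq_one

theorem exists_forall_mem_ideal_apply_eq_zero [CompactSpace X] {I : Ideal C(X, k)} (hI : I ≠ ⊤) :
    ∃ x, ∀ f ∈ I, f x = 0 := by
  obtain ⟨x, hx⟩ := CompactSpace.iInter_nonempty (t := fun f : I => {x | f.1 x = 0})
    (fun f => isClosed_eq f.1.continuous continuous_const) fun u => by
      obtain ⟨x, hx⟩ := exists_forall_mem_finset_apply_eq_zero hI u
      exact ⟨x, Set.mem_iInter₂.2 hx⟩
  exact ⟨x, fun f hf => Set.mem_iInter.1 hx ⟨f, hf⟩⟩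

variable (k X)

theorem evalAlgHom_surjective [CompactSpace X] :
    Function.Surjective (ContinuousMap.evalAlgHom k k : X → C(X, k) →ₐ[k] k) := by
  intro φ
  obtain ⟨x, hx⟩ := exists_forall_mem_ideal_apply_eq_zero (RingHom.ker_ne_top φ)
  refine ⟨x, AlgHom.ext fun f => ?_⟩
  have sub_mem_ker : f - algebraMap k C(X, k) (φ f) ∈ RingHom.ker φ := by
    rw [RingHom.mem_ker, map_sub, AlgHom.commutes, Algebra.algebraMap_self_apply, sub_self]
  exact sub_eq_zero.1 (hx _ sub_mem_ker)

theorem profinite_eval_bijective_general [CompactSpace X] [TotallySeparatedSpace X] :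
    Function.Bijective (ContinuousMap.evalAlgHom k k : X → C(X, k) →ₐ[k] k) :=
  ⟨evalAlgHom_injective k X, evalAlgHom_surjective k X⟩

end DiscreteField

/-- Stone duality, the other half: for a profinite space `S` (compact, Hausdorff, totally
disconnected), the evaluation map `S → Hom(C(S, F₂), F₂)`, `s ↦ (f ↦ f s)`, is a bijection. -/
theorem profinite_eval_bijective (S : Type*) [TopologicalSpace S] [CompactSpace S]
    [T2Space S] [TotallyDisconnectedSpace S] :
    Function.Bijective (fun s : S => evalAtRingHom S s) :=
  algHom_toRingHom_bijective.comp (profinite_eval_bijective_general (ZMod 2) S)
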